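/- Let A be an entire function and suppose that the differential equation w'' + A·w = 0 has three entire solutions w₁, w₂, w₃ that are pairwise linearly independent over ℂ and each of which has only real zeros (i.e. wⱼ(z) = 0 implies z ∈ ℝ for j = 1,2,3). Then A is constant. -/

import Mathlib

open Complex

/-- Two entire functions are linearly independent over `ℂ` if neither is a complex
scalar multiple of the other. -/
def LinIndepPair (f g : ℂ → ℂ) : Prop :=
  (¬ ∃ c : ℂ, ∀ z : ℂ, f z = c * g z) ∧ (¬ ∃ c : ℂ, ∀ z : ℂ, g z = c * f z)

/-! A quotient of two of the three solutions, multiplied by a suitable quotient of Wronskians, omits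
`0` and `1` on the upper half-plane `ℍ`. A function omitting these values is `exp (2πi cosh² g)`
with `g` holomorphic; as `cosh² g` omits the integers, `g` omits a point of every disc of radius
`4`, and Bloch's theorem gives `|g'| ≤ M / Im z` on `ℍ`. Hence `g` grows at most logarithmically,
and the logarithmic derivative of the quotient, a constant multiple of `1 / (w₁ w₂)`, is bounded by
a polynomial in `1 + |z|` and `1 / Im z`.

Since `1 / (w₁ w₂)` has no zeros in `ℍ`, Borel–Carathéodory shows that its logarithm has degree `1`
in `|z|`, and Cauchy's estimate that `w₁'/w₁ + w₂'/w₂` has degree `0`. Combining the three pairs, so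
does each `s = w'/w`, and hence so does `A = -(s' + s²)`: it is `O(((1 + |z|) / Im z) ^ n)`.
The reflection `z ↦ -z` gives the same bound in the lower half-plane. The maximum principle for
`A u * (u² - R²) ^ n` on `|u| ≤ R` removes the singularity of this bound at the real line, and
Liouville's theorem applies. -/

open Metric Set Filter Asymptotics
open scoped Topology

section SimplyConnected

variable {U : Set ℂ} {f : ℂ → ℂ}

lemma exists_differentiableOn_exp_eq (hUo : IsOpen U) (hUc : IsSimplyConnected U)
    (hf : DifferentiableOn ℂ f U) (hf₀ : ∀ z ∈ U, f z ≠ 0) :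
    ∃ l : ℂ → ℂ, DifferentiableOn ℂ l U ∧ ∀ z ∈ U, exp (l z) = f z := by
  obtain ⟨l, hlc, hl⟩ := exists_continuousOn_eqOn_exp_comp hUc hUo hf.continuousOn
    (fun ⟨z, hz, hfz⟩ => hf₀ z hz hfz)
  refine ⟨l, fun z hz => DifferentiableAt.differentiableWithinAt ?_, hl⟩
  have hU : U ∈ 𝓝 z := hUo.mem_nhds hz
  have hexp : HasStrictDerivAt exp (exp (l z)) (l z) := hasStrictDerivAt_exp (l z)
  have hne : exp (l z) ≠ 0 := exp_ne_zero (l z)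
  have hinv : DifferentiableAt ℂ (hexp.localInverse _ _ _ hne) (f z) :=
    hl hz ▸ (hexp.to_localInverse hne).hasDerivAt.differentiableAt
  refine (hinv.comp z (hf.differentiableAt hU)).congr_of_eventuallyEq ?_
  filter_upwards [hU, (hlc.continuousAt hU).eventually (hexp.eventually_left_inverse hne)]
    with w hw hlw
  rw [Function.comp_apply, ← hl hw]
  exact hlw.symm

lemma exists_differentiableOn_sq_eq (hUo : IsOpen U) (hUc : IsSimplyConnected U)
    (hf : DifferentiableOn ℂ f U) (hf₀ : ∀ z ∈ U, f z ≠ 0) :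
    ∃ u : ℂ → ℂ, DifferentiableOn ℂ u U ∧ ∀ z ∈ U, u z ^ 2 = f z := by
  obtain ⟨l, hl, hexp⟩ := exists_differentiableOn_exp_eq hUo hUc hf hf₀
  refine ⟨fun z => exp (l z / 2), (hl.div_const 2).cexp, fun z hz => ?_⟩
  rw [← exp_nat_mul, ← hexp z hz]
  congr 1
  push_cast
  ring

lemma exists_differentiableOn_cosh_sq_eq (hUo : IsOpen U) (hUc : IsSimplyConnected U)
    (hf : DifferentiableOn ℂ f U) (hf₀ : ∀ z ∈ U, f z ≠ 0) (hf₁ : ∀ z ∈ U, f z ≠ 1) :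
    ∃ g : ℂ → ℂ, DifferentiableOn ℂ g U ∧ ∀ z ∈ U, cosh (g z) ^ 2 = f z := by
  obtain ⟨u, hu, hu₂⟩ := exists_differentiableOn_sq_eq hUo hUc hf hf₀
  obtain ⟨v, hv, hv₂⟩ := exists_differentiableOn_sq_eq hUo hUc (hf.sub_const 1)
    (fun z hz => sub_ne_zero.2 (hf₁ z hz))
  have huv : ∀ z ∈ U, (u z - v z) * (u z + v z) = 1 := fun z hz => by
    linear_combination hu₂ z hz - hv₂ z hz
  obtain ⟨g, hg, hexp⟩ := exists_differentiableOn_exp_eq hUo hUc (hu.sub hv)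
    (fun z hz => left_ne_zero_of_mul_eq_one (huv z hz))
  refine ⟨g, hg, fun z hz => ?_⟩
  have hexp_neg : exp (-g z) = u z + v z := by
    rw [exp_neg, hexp z hz]
    exact inv_eq_of_mul_eq_one_right (huv z hz)
  rw [cosh, hexp z hz, hexp_neg, ← hu₂ z hz, Pi.sub_apply]
  ring

lemma exists_differentiableOn_exp_cosh_sq_eq (hUo : IsOpen U) (hUc : IsSimplyConnected U)
    (hf : DifferentiableOn ℂ f U) (hf₀ : ∀ z ∈ U, f z ≠ 0) (hf₁ : ∀ z ∈ U, f z ≠ 1) :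
    ∃ g : ℂ → ℂ, DifferentiableOn ℂ g U ∧
      ∀ z ∈ U, exp (2 * Real.pi * I * cosh (g z) ^ 2) = f z := by
  obtain ⟨l, hl, hexp⟩ := exists_differentiableOn_exp_eq hUo hUc hf hf₀
  have hl_ne : ∀ z ∈ U, ∀ n : ℤ, l z / (2 * Real.pi * I) ≠ n := fun z hz n hn => by
    rw [div_eq_iff two_pi_I_ne_zero] at hn
    exact hf₁ z hz (hexp z hz ▸ exp_eq_one_iff.2 ⟨n, hn⟩)
  obtain ⟨g, hg, hcosh⟩ := exists_differentiableOn_cosh_sq_eq hUo hUc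
    (hl.div_const (2 * Real.pi * I)) (fun z hz => by exact_mod_cast hl_ne z hz 0)
    (fun z hz => by exact_mod_cast hl_ne z hz 1)
  refine ⟨g, hg, fun z hz => ?_⟩
  rw [hcosh z hz, mul_div_cancel₀ _ two_pi_I_ne_zero, hexp z hz]

end SimplyConnected

section Bloch

variable {g : ℂ → ℂ} {c : ℂ} {R : ℝ}

lemma div_two_mul_norm_sub_le_of_norm_deriv_le (hg : DifferentiableOn ℂ g (ball c R))
    (hle : ∀ z ∈ ball c R, ‖deriv g z‖ ≤ 2 * ‖deriv g c‖) {z : ℂ} (hz : z ∈ closedBall c (R / 6))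
    (hR : 0 < R) : ‖deriv g c‖ / 2 * ‖z - c‖ ≤ ‖g z - g c‖ := by
  set m := ‖deriv g c‖ with hm
  have hsub : closedBall c (R / 6) ⊆ ball c R := closedBall_subset_ball (by linarith)
  have hmaps : MapsTo (deriv g) (ball c R) (closedBall (deriv g c) (3 * m)) := fun w hw => by
    rw [mem_closedBall_iff_norm]
    linarith [norm_sub_le (deriv g w) (deriv g c), hle w hw]
  have hderiv : ∀ w ∈ closedBall c (R / 6), ‖deriv g w - deriv g c‖ ≤ m / 2 := fun w hw => by
    calc ‖deriv g w - deriv g c‖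
        ≤ 3 * m / R * dist w c := dist_eq_norm (deriv g w) _ ▸
          dist_le_div_mul_dist_of_mapsTo_ball (hg.deriv isOpen_ball) hmaps (hsub hw)
      _ ≤ 3 * m / R * (R / 6) := by gcongr; exact hw
      _ = m / 2 := by field_simp; ring
  have hlin : ‖(g z - deriv g c * z) - (g c - deriv g c * c)‖ ≤ m / 2 * ‖z - c‖ :=
    (convex_closedBall c (R / 6)).norm_image_sub_le_of_norm_hasDerivWithin_le
      (f := fun w => g w - deriv g c * w) (f' := fun w => deriv g w - deriv g c)
      (fun w hw => by
        simpa using ((hg.differentiableAt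
          (isOpen_ball.mem_nhds (hsub hw))).hasDerivAt.fun_sub
            ((hasDerivAt_id w).const_mul (deriv g c))).hasDerivWithinAt)
      hderiv (mem_closedBall_self (by linarith)) hz
  have htri := norm_sub_le (g z - g c) ((g z - deriv g c * z) - (g c - deriv g c * c))
  rw [show (g z - g c) - ((g z - deriv g c * z) - (g c - deriv g c * c))
    = deriv g c * (z - c) by ring, norm_mul, ← hm] at htri
  linarith

lemma ball_subset_image_of_norm_deriv_le (hg : DifferentiableOn ℂ g (ball c R))
    (hle : ∀ z ∈ ball c R, ‖deriv g z‖ ≤ 2 * ‖deriv g c‖) :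
    ball (g c) (‖deriv g c‖ * R / 24) ⊆ g '' ball c R := by
  rcases le_or_gt (‖deriv g c‖ * R / 24) 0 with h | h
  · simp [ball_eq_empty.2 h]
  have hR : 0 < R := pos_of_mul_pos_right (by linarith : 0 < ‖deriv g c‖ * R) (norm_nonneg _)
  have hg' : deriv g c ≠ 0 := fun h' => by simp [h'] at h
  have hsub : closedBall c (R / 6) ⊆ ball c R := closedBall_subset_ball (by linarith)
  have hlow : ∀ z ∈ sphere c (R / 6), ‖deriv g c‖ * R / 12 ≤ ‖g z - g c‖ := fun z hz => by
    have := div_two_mul_norm_sub_le_of_norm_deriv_le hg hle (sphere_subset_closedBall hz) hR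
    rw [mem_sphere_iff_norm.1 hz] at this
    linarith
  have hne : ∃ᶠ z in 𝓝 c, g z ≠ g c :=
    ((hg.differentiableAt (ball_mem_nhds c hR)).hasDerivAt.eventually_ne hg').frequently.filter_mono
      nhdsWithin_le_nhds
  have hdiff : DiffContOnCl ℂ g (ball c (R / 6)) :=
    (hg.mono (closure_ball c (by positivity : R / 6 ≠ 0) ▸ hsub)).diffContOnCl
  calc ball (g c) (‖deriv g c‖ * R / 24) = ball (g c) (‖deriv g c‖ * R / 12 / 2) := by ring_nf
    _ ⊆ g '' closedBall c (R / 6) :=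
      hdiff.ball_subset_image_closedBall (by positivity) hlow hne
    _ ⊆ g '' ball c R := image_mono hsub

lemma exists_ball_norm_deriv_le (hR : 0 < R) (hg : DifferentiableOn ℂ g (ball c R)) :
    ∃ p r, ball p r ⊆ ball c R ∧ ‖deriv g c‖ * R ≤ 4 * (‖deriv g p‖ * r) ∧
      ∀ z ∈ ball p r, ‖deriv g z‖ ≤ 2 * ‖deriv g p‖ := by
  have hcont : ContinuousOn (fun z => ‖deriv g z‖ * (R / 2 - dist z c)) (closedBall c (R / 2)) :=
    ((hg.deriv isOpen_ball).continuousOn.mono (closedBall_subset_ball (by linarith))).norm.mul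
      (by fun_prop)
  obtain ⟨p, -, hmax⟩ := (isCompact_closedBall c (R / 2)).exists_isMaxOn
    ⟨c, mem_closedBall_self (by positivity)⟩ hcont
  have hcp : ‖deriv g c‖ * (R / 2) ≤ ‖deriv g p‖ * (R / 2 - dist p c) := by
    simpa using hmax (mem_closedBall_self (by positivity))
  have hdist : ∀ z ∈ ball p ((R / 2 - dist p c) / 2), (R / 2 - dist p c) / 2 ≤ R / 2 - dist z c :=
    fun z hz => by linarith [dist_triangle z p c, mem_ball.1 hz]
  refine ⟨p, (R / 2 - dist p c) / 2, fun z hz => ?_, by linarith, fun z hz => ?_⟩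
  · rw [mem_ball]
    linarith [hdist z hz, pos_of_mem_ball hz]
  · have hr := pos_of_mem_ball hz
    have hzp : ‖deriv g z‖ * (R / 2 - dist z c) ≤ ‖deriv g p‖ * (R / 2 - dist p c) :=
      hmax (mem_closedBall.2 (by linarith [hdist z hz]))
    have := mul_le_mul_of_nonneg_left (hdist z hz) (norm_nonneg (deriv g z))
    exact le_of_mul_le_mul_right (by linarith) hr

lemma norm_deriv_le_of_forall_ball_not_subset_image {ρ : ℝ} (hR : 0 < R)
    (hg : DifferentiableOn ℂ g (ball c R)) (hρ : ∀ w, ¬ ball w ρ ⊆ g '' ball c R) :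
    ‖deriv g c‖ ≤ 96 * ρ / R := by
  obtain ⟨p, r, hsub, hcp, hle⟩ := exists_ball_norm_deriv_le hR hg
  have hcover := (ball_subset_image_of_norm_deriv_le (hg.mono hsub) hle).trans
    (image_mono hsub)
  have hlt : ‖deriv g p‖ * r / 24 < ρ := by
    by_contra! h
    exact hρ (g p) ((ball_subset_ball h).trans hcover)
  rw [le_div_iff₀ hR]
  linarith

end Bloch

section Cosh

lemma exists_mem_Icc_cosh_sq_eq_intCast {x : ℝ} (hx : 0 ≤ x) :
    ∃ t ∈ Icc x (x + 1), ∃ n : ℤ, Real.cosh t ^ 2 = n := by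
  have hgap : Real.cosh x ^ 2 + 1 ≤ Real.cosh (x + 1) ^ 2 := by
    have hcosh : 2 ≤ Real.cosh 1 ^ 2 := by
      nlinarith [Real.cosh_sq 1, Real.self_le_sinh_iff.2 zero_le_one]
    have hsinh : 0 ≤ Real.sinh x * Real.sinh 1 :=
      mul_nonneg (Real.sinh_nonneg_iff.2 hx) (Real.sinh_nonneg_iff.2 zero_le_one)
    calc Real.cosh x ^ 2 + 1 ≤ (Real.cosh x * Real.cosh 1) ^ 2 := by
          nlinarith [Real.one_le_cosh x]
      _ ≤ Real.cosh (x + 1) ^ 2 := by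
          rw [Real.cosh_add]
          gcongr
          linarith
  obtain ⟨t, ht, h⟩ := intermediate_value_Icc (f := fun t => Real.cosh t ^ 2)
    (by linarith : x ≤ x + 1) (by fun_prop)
    ⟨Int.le_ceil (Real.cosh x ^ 2), (Int.ceil_lt_add_one _).le.trans hgap⟩
  exact ⟨t, ht, _, h⟩

lemma exists_abs_sub_le_one_cosh_sq_eq_intCast (x : ℝ) :
    ∃ t : ℝ, |t - x| ≤ 1 ∧ ∃ n : ℤ, Real.cosh t ^ 2 = n := by
  obtain ⟨t, ⟨hxt, htx⟩, n, hn⟩ := exists_mem_Icc_cosh_sq_eq_intCast (abs_nonneg x)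
  rcases abs_choice x with h | h <;> rw [h] at hxt htx
  · exact ⟨t, abs_le.2 ⟨by linarith, by linarith⟩, n, hn⟩
  · exact ⟨-t, abs_le.2 ⟨by linarith, by linarith⟩, n, by rwa [Real.cosh_neg]⟩

lemma cosh_add_int_mul_pi_mul_I_sq (z : ℂ) (m : ℤ) :
    cosh (z + m * Real.pi * I) ^ 2 = cosh z ^ 2 := by
  have hsin : sin (m * Real.pi) = 0 := sin_int_mul_pi m
  have hcos : cos (m * Real.pi) ^ 2 = 1 := by simp [cos_sq', hsin]
  rw [cosh_add, cosh_mul_I, sinh_mul_I, hsin, zero_mul, mul_zero, add_zero, mul_pow, hcos, mul_one]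

lemma exists_mem_ball_cosh_sq_eq_intCast (w : ℂ) : ∃ v ∈ ball w 4, ∃ n : ℤ, cosh v ^ 2 = n := by
  obtain ⟨s, hs, n, hn⟩ := exists_abs_sub_le_one_cosh_sq_eq_intCast w.re
  set m : ℤ := round (w.im / Real.pi)
  have him : |m * Real.pi - w.im| ≤ 2 := by
    calc |m * Real.pi - w.im| = |w.im / Real.pi - m| * Real.pi := by
          rw [abs_sub_comm, ← abs_of_pos Real.pi_pos, ← abs_mul, abs_of_pos Real.pi_pos,
            sub_mul, div_mul_cancel₀ _ Real.pi_ne_zero]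
      _ ≤ 1 / 2 * 4 := by
          gcongr
          exacts [abs_sub_round _, Real.pi_lt_four.le]
      _ = 2 := by norm_num
  refine ⟨s + m * Real.pi * I, ?_, n, ?_⟩
  · rw [mem_ball_iff_norm]
    refine (norm_le_abs_re_add_abs_im _).trans_lt ?_
    have hre' : (s + m * Real.pi * I - w : ℂ).re = s - w.re := by simp
    have him' : (s + m * Real.pi * I - w : ℂ).im = m * Real.pi - w.im := by simp
    rw [hre', him']
    linarith
  · rw [cosh_add_int_mul_pi_mul_I_sq]
    exact_mod_cast hn

end Cosh

local notation "ℍₒ" => UpperHalfPlane.upperHalfPlaneSet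

section Growth

variable {E F : Type*} [NormedAddCommGroup E] [NormedAddCommGroup F]

/-- The weight `(1 + |z|) ^ d * ((1 + |z|) / Im z) ^ n` on the upper half-plane: of degree `d` at
infinity in every sector around the imaginary axis, with a pole of order `n` at the real line. -/
noncomputable def growthWeight (d : ℤ) (n : ℕ) (z : ℂ) : ℝ :=
  (1 + ‖z‖) ^ d * ((1 + ‖z‖) / z.im) ^ n

/-- A function has growth of degree `d` if on the upper half-plane it is bounded by some weight
of degree `d`; the order of the pole at the real line is not recorded. -/
def HasGrowth (d : ℤ) (f : ℂ → E) : Prop :=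
  ∃ n : ℕ, f =O[𝓟 ℍₒ] growthWeight d n

lemma one_le_one_add_norm_div_im {z : ℂ} (hz : z ∈ ℍₒ) : 1 ≤ (1 + ‖z‖) / z.im := by
  rw [one_le_div hz]
  linarith [im_le_norm z]

lemma growthWeight_pos (d : ℤ) (n : ℕ) {z : ℂ} (hz : z ∈ ℍₒ) : 0 < growthWeight d n z := by
  have : 0 < z.im := hz
  unfold growthWeight
  positivity

lemma growthWeight_le_growthWeight {d e : ℤ} {m n : ℕ} (hde : d ≤ e) (hmn : m ≤ n) {z : ℂ}
    (hz : z ∈ ℍₒ) : growthWeight d m z ≤ growthWeight e n z := by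
  have hρ := one_le_one_add_norm_div_im hz
  unfold growthWeight
  gcongr
  linarith [norm_nonneg z]

lemma growthWeight_mul_growthWeight (d e : ℤ) (m n : ℕ) (z : ℂ) :
    growthWeight d m z * growthWeight e n z = growthWeight (d + e) (m + n) z := by
  rw [growthWeight, growthWeight, growthWeight, zpow_add₀ (by positivity), pow_add]
  ring

lemma inv_im_eq_growthWeight (z : ℂ) : z.im⁻¹ = growthWeight (-1) 1 z := by
  have : 1 + ‖z‖ ≠ 0 := by positivity
  rw [growthWeight, zpow_neg_one]
  field_simp

namespace HasGrowth

variable {d e : ℤ} {f : ℂ → E} {g : ℂ → F}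

lemma of_norm_le {n : ℕ} {C : ℝ} (h : ∀ z ∈ ℍₒ, ‖f z‖ ≤ C * growthWeight d n z) :
    HasGrowth d f :=
  ⟨n, isBigO_principal.2 ⟨C, fun z hz => by
    rw [Real.norm_of_nonneg (growthWeight_pos d n hz).le]
    exact h z hz⟩⟩

lemma exists_norm_le (hf : HasGrowth d f) :
    ∃ n : ℕ, ∃ C > 0, ∀ z ∈ ℍₒ, ‖f z‖ ≤ C * growthWeight d n z := by
  obtain ⟨n, hn⟩ := hf
  obtain ⟨C, hC, h⟩ := hn.exists_pos
  exact ⟨n, C, hC, fun z hz => by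
    simpa only [Real.norm_of_nonneg (growthWeight_pos d n hz).le] using
      isBigOWith_principal.1 h z hz⟩

lemma trans_norm_le (hf : HasGrowth d f) (hle : ∀ z ∈ ℍₒ, ‖g z‖ ≤ ‖f z‖) : HasGrowth d g :=
  hf.imp fun _ hn => (IsBigO.of_bound' (eventually_principal.2 hle)).trans hn

lemma congr (hf : HasGrowth d f) {f' : ℂ → E} (h : EqOn f' f ℍₒ) : HasGrowth d f' :=
  hf.trans_norm_le fun _ hz => (congrArg norm (h hz)).le

lemma mono (hf : HasGrowth d f) (hde : d ≤ e) : HasGrowth e f := by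
  obtain ⟨n, C, hC, h⟩ := hf.exists_norm_le
  exact of_norm_le fun z hz => (h z hz).trans <|
    mul_le_mul_of_nonneg_left (growthWeight_le_growthWeight hde le_rfl hz) hC.le

lemma add {f' : ℂ → E} (hf : HasGrowth d f) (hf' : HasGrowth d f') :
    HasGrowth d fun z => f z + f' z := by
  obtain ⟨m, hm⟩ := hf
  obtain ⟨n, hn⟩ := hf'
  have hweight : ∀ k ≤ max m n, growthWeight d k =O[𝓟 ℍₒ] growthWeight d (max m n) := fun k hk =>
    .of_bound' <| eventually_principal.2 fun _ hz => by
      rw [Real.norm_of_nonneg (growthWeight_pos _ _ hz).le,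
        Real.norm_of_nonneg (growthWeight_pos _ _ hz).le]
      exact growthWeight_le_growthWeight le_rfl hk hz
  exact ⟨max m n, (hm.trans (hweight m (le_max_left m n))).add
    (hn.trans (hweight n (le_max_right m n)))⟩

lemma neg (hf : HasGrowth d f) : HasGrowth d fun z => -f z :=
  hf.imp fun _ hn => hn.neg_left

lemma sub {f' : ℂ → E} (hf : HasGrowth d f) (hf' : HasGrowth d f') :
    HasGrowth d fun z => f z - f' z := by
  simpa only [sub_eq_add_neg] using hf.add hf'.neg

lemma mul {f g : ℂ → ℂ} (hf : HasGrowth d f) (hg : HasGrowth e g) :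
    HasGrowth (d + e) fun z => f z * g z := by
  obtain ⟨m, hm⟩ := hf
  obtain ⟨n, hn⟩ := hg
  exact ⟨m + n, (hm.mul hn).congr_right (growthWeight_mul_growthWeight d e m n)⟩

lemma const_mul {f : ℂ → ℂ} (c : ℂ) (hf : HasGrowth d f) : HasGrowth d fun z => c * f z :=
  hf.imp fun _ hn => hn.const_mul_left c

end HasGrowth

lemma ball_im_subset_upperHalfPlaneSet (z : ℂ) : ball z z.im ⊆ ℍₒ := fun w hw => by
  have him := (abs_im_le_norm (w - z)).trans_lt (mem_ball_iff_norm.1 hw)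
  rw [sub_im] at him
  exact (by linarith [neg_lt_of_abs_lt him] : 0 < w.im)

lemma zpow_le_two_zpow_abs_mul_zpow {x y : ℝ} (hx : 0 < x) (hy : 0 < y) (hxy : x ≤ 2 * y)
    (hyx : y ≤ 2 * x) (d : ℤ) : x ^ d ≤ 2 ^ |d| * y ^ d := by
  rcases le_total 0 d with hd | hd
  · rw [abs_of_nonneg hd, ← mul_zpow]
    exact zpow_le_zpow_left₀ hd hx.le hxy
  · rw [abs_of_nonpos hd, ← neg_neg d, zpow_neg x, zpow_neg y, neg_neg,
      inv_le_comm₀ (by positivity) (by positivity), mul_inv, inv_inv,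
      inv_mul_le_iff₀ (by positivity), ← mul_zpow]
    exact zpow_le_zpow_left₀ (neg_nonneg.2 hd) hy.le hyx

lemma growthWeight_le_of_mem_closedBall (d : ℤ) (n : ℕ) {z w : ℂ} (hz : z ∈ ℍₒ)
    (hw : w ∈ closedBall z (z.im / 2)) :
    growthWeight d n w ≤ 2 ^ |d| * 4 ^ n * growthWeight d n z := by
  have hy : 0 < z.im := hz
  have hdist : ‖w - z‖ ≤ z.im / 2 := mem_closedBall_iff_norm.1 hw
  have him : z.im / 2 ≤ w.im := by
    have := (abs_le.1 ((abs_im_le_norm (w - z)).trans hdist)).1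
    rw [sub_im] at this
    linarith
  have hv : 0 < w.im := (half_pos hy).trans_le him
  have hwz : 1 + ‖w‖ ≤ 2 * (1 + ‖z‖) := by
    linarith [norm_le_norm_add_norm_sub' w z, im_le_norm z, norm_nonneg z]
  have hzw : 1 + ‖z‖ ≤ 2 * (1 + ‖w‖) := by
    linarith [norm_le_norm_add_norm_sub' z w, norm_sub_rev z w, im_le_norm z, norm_nonneg w]
  calc growthWeight d n w
      ≤ (2 ^ |d| * (1 + ‖z‖) ^ d) * (2 * (1 + ‖z‖) / (z.im / 2)) ^ n := by
        unfold growthWeight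
        gcongr
        exact zpow_le_two_zpow_abs_mul_zpow (by positivity) (by positivity) hwz hzw d
    _ = 2 ^ |d| * 4 ^ n * growthWeight d n z := by
        rw [growthWeight, show 2 * (1 + ‖z‖) / (z.im / 2) = 4 * ((1 + ‖z‖) / z.im) by
          field_simp; norm_num, mul_pow]
        ring

protected lemma HasGrowth.deriv {d : ℤ} {f : ℂ → ℂ} (hf : HasGrowth d f)
    (hdiff : DifferentiableOn ℂ f ℍₒ) : HasGrowth (d - 1) (deriv f) := by
  obtain ⟨n, C, hC, h⟩ := hf.exists_norm_le
  refine HasGrowth.of_norm_le (n := n + 1) (C := 2 * (C * (2 ^ |d| * 4 ^ n))) fun z hz => ?_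
  have hy : 0 < z.im := hz
  have hsub : closedBall z (z.im / 2) ⊆ ℍₒ :=
    (closedBall_subset_ball (half_lt_self hy)).trans (ball_im_subset_upperHalfPlaneSet z)
  have hcauchy := norm_deriv_le_of_forall_mem_sphere_norm_le (half_pos hy)
    (hdiff.mono (closure_ball z (half_pos hy).ne' ▸ hsub)).diffContOnCl fun w hw =>
      (h w (hsub (sphere_subset_closedBall hw))).trans <| mul_le_mul_of_nonneg_left
        (growthWeight_le_of_mem_closedBall d n hz (sphere_subset_closedBall hw)) hC.le
  calc ‖_root_.deriv f z‖
      ≤ C * (2 ^ |d| * 4 ^ n * growthWeight d n z) / (z.im / 2) := hcauchy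
    _ = 2 * (C * (2 ^ |d| * 4 ^ n)) * (growthWeight d n z * z.im⁻¹) := by field_simp
    _ = 2 * (C * (2 ^ |d| * 4 ^ n)) * growthWeight (d - 1) (n + 1) z := by
        rw [inv_im_eq_growthWeight, growthWeight_mul_growthWeight, sub_eq_add_neg]

end Growth

section Landau

variable {g : ℂ → ℂ}

lemma isSimplyConnected_upperHalfPlaneSet : IsSimplyConnected ℍₒ :=
  have := (convex_halfSpace_im_gt 0).contractibleSpace ⟨I, by simp⟩
  inferInstanceAs (SimplyConnectedSpace {z : ℂ | 0 < z.im})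

lemma norm_deriv_le_div_im {ρ : ℝ} (hg : DifferentiableOn ℂ g ℍₒ)
    (hρ : ∀ w, ¬ ball w ρ ⊆ g '' ℍₒ) {z : ℂ} (hz : z ∈ ℍₒ) : ‖deriv g z‖ ≤ 96 * ρ / z.im :=
  have hsub := ball_im_subset_upperHalfPlaneSet z
  norm_deriv_le_of_forall_ball_not_subset_image hz (hg.mono hsub)
    fun w hw => hρ w (hw.trans (image_mono hsub))

lemma norm_sub_le_mul_log_of_norm_deriv_le {M : ℝ} (hg : DifferentiableOn ℂ g ℍₒ)
    (hM : ∀ z ∈ ℍₒ, ‖deriv g z‖ ≤ M / z.im) (x : ℝ) {a b : ℝ} (ha : 0 < a) (hab : a ≤ b) :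
    ‖g (x + b * I) - g (x + a * I)‖ ≤ M * (Real.log b - Real.log a) := by
  have hpos : ∀ t ∈ Icc a b, 0 < t := fun t ht => ha.trans_le ht.1
  have hderiv : ∀ t ∈ Icc a b, HasDerivAt (fun t : ℝ => g (x + t * I) - g (x + a * I))
      (deriv g (x + t * I) * I) t := fun t ht => by
    have hmem : (x + t * I : ℂ) ∈ ℍₒ := by simpa using hpos t ht
    have hg' := (hg.differentiableAt
      (UpperHalfPlane.isOpen_upperHalfPlaneSet.mem_nhds hmem)).hasDerivAt
    have hline : HasDerivAt (fun t : ℂ => x + t * I) I t := by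
      simpa using ((hasDerivAt_id (t : ℂ)).mul_const I).const_add (x : ℂ)
    exact ((hg'.comp (t : ℂ) hline).comp_ofReal).sub_const _
  have hlog : ∀ t ∈ Icc a b,
      HasDerivAt (fun t => M * (Real.log t - Real.log a)) (M / t) t := fun t ht =>
    ((Real.hasDerivAt_log (hpos t ht).ne').sub_const _).const_mul M
  refine image_norm_le_of_norm_deriv_right_le_deriv_boundary'
    (f := fun t : ℝ => g (x + t * I) - g (x + a * I))
    (fun t ht => (hderiv t ht).continuousAt.continuousWithinAt)
    (fun t ht => (hderiv t (Ico_subset_Icc_self ht)).hasDerivWithinAt) (by simp)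
    (fun t ht => (hlog t ht).continuousAt.continuousWithinAt)
    (fun t ht => (hlog t (Ico_subset_Icc_self ht)).hasDerivWithinAt)
    (fun t ht => ?_) (right_mem_Icc.2 hab)
  simpa using hM (x + t * I) (by simpa using hpos t (Ico_subset_Icc_self ht))

lemma norm_sub_le_mul_abs_div_of_norm_deriv_le {M : ℝ} (hg : DifferentiableOn ℂ g ℍₒ)
    (hM₀ : 0 ≤ M) (hM : ∀ z ∈ ℍₒ, ‖deriv g z‖ ≤ M / z.im) (x : ℝ) {b : ℝ} (hb : 0 < b) :
    ‖g (x + b * I) - g (b * I)‖ ≤ M / b * |x| := by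
  have hmem : ∀ z : ℂ, b ≤ z.im → z ∈ ℍₒ := fun z hz => hb.trans_le hz
  simpa using (convex_halfSpace_im_ge b).norm_image_sub_le_of_norm_deriv_le (C := M / b)
    (fun z hz => hg.differentiableAt
      (UpperHalfPlane.isOpen_upperHalfPlaneSet.mem_nhds (hmem z hz)))
    (fun z hz => (hM z (hmem z hz)).trans (div_le_div_of_nonneg_left hM₀ hb hz))
    (by simp : (b * I : ℂ) ∈ {z : ℂ | b ≤ z.im}) (by simp : (x + b * I : ℂ) ∈ {z : ℂ | b ≤ z.im})

-- Integrate `g'` from `I` up to height `1 + ‖z‖`, then horizontally, then down to `z`.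
lemma norm_le_of_norm_deriv_le_div_im {M : ℝ} (hg : DifferentiableOn ℂ g ℍₒ) (hM₀ : 0 ≤ M)
    (hM : ∀ z ∈ ℍₒ, ‖deriv g z‖ ≤ M / z.im) {z : ℂ} (hz : z ∈ ℍₒ) :
    ‖g z‖ ≤ ‖g I‖ + M + M * Real.log (1 + ‖z‖) + M * Real.log ((1 + ‖z‖) / z.im) := by
  have hy : 0 < z.im := hz
  set R := 1 + ‖z‖ with hR
  have hR₀ : 0 < R := by positivity
  have hup := norm_sub_le_mul_log_of_norm_deriv_le hg hM 0 one_pos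
    (by linarith [hR, norm_nonneg z] : 1 ≤ R)
  have hacross := norm_sub_le_mul_abs_div_of_norm_deriv_le hg hM₀ hM z.re hR₀
  have hdown := norm_sub_le_mul_log_of_norm_deriv_le hg hM z.re hy
    (by linarith [im_le_norm z] : z.im ≤ R)
  have hle : M / R * |z.re| ≤ M := by
    rw [div_mul_eq_mul_div, div_le_iff₀ hR₀]
    gcongr
    linarith [abs_re_le_norm z]
  simp only [ofReal_zero, zero_add, ofReal_one, one_mul, Real.log_one, sub_zero] at hup
  rw [re_add_im, norm_sub_rev] at hdown
  rw [Real.log_div hR₀.ne' hy.ne', mul_sub]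
  rw [mul_sub] at hdown
  linarith [norm_le_norm_add_norm_sub' (g z) (g (z.re + R * I)),
    norm_le_norm_add_norm_sub' (g (z.re + R * I)) (g (R * I)),
    norm_le_norm_add_norm_sub' (g (R * I)) (g I)]

lemma hasGrowth_exp_norm_of_norm_deriv_le_div_im {M : ℕ} (hg : DifferentiableOn ℂ g ℍₒ)
    (hM : ∀ z ∈ ℍₒ, ‖deriv g z‖ ≤ M / z.im) : HasGrowth M fun z => Real.exp ‖g z‖ := by
  refine .of_norm_le (n := M) (C := Real.exp (‖g I‖ + M)) fun z hz => ?_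
  have hy : 0 < z.im := hz
  calc ‖Real.exp ‖g z‖‖ = Real.exp ‖g z‖ := Real.norm_of_nonneg (Real.exp_pos _).le
    _ ≤ Real.exp (‖g I‖ + M + M * Real.log (1 + ‖z‖) + M * Real.log ((1 + ‖z‖) / z.im)) :=
      Real.exp_le_exp.2 (norm_le_of_norm_deriv_le_div_im hg M.cast_nonneg hM hz)
    _ = Real.exp (‖g I‖ + M) * growthWeight M M z := by
      rw [Real.exp_add, Real.exp_add, Real.exp_nat_mul, Real.exp_nat_mul,
        Real.exp_log (by positivity), Real.exp_log (by positivity), growthWeight, zpow_natCast,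
        mul_assoc]

lemma norm_cosh_le (z : ℂ) : ‖cosh z‖ ≤ Real.exp ‖z‖ := by
  rw [cosh, norm_div, norm_ofNat, div_le_iff₀ two_pos]
  linarith [norm_add_le (exp z) (exp (-z)), norm_exp_le_exp_norm z,
    norm_neg z ▸ norm_exp_le_exp_norm (-z)]

lemma norm_sinh_le (z : ℂ) : ‖sinh z‖ ≤ Real.exp ‖z‖ := by
  rw [sinh, norm_div, norm_ofNat, div_le_iff₀ two_pos]
  linarith [norm_sub_le (exp z) (exp (-z)), norm_exp_le_exp_norm z,
    norm_neg z ▸ norm_exp_le_exp_norm (-z)]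

lemma logDeriv_of_eqOn_exp {U : Set ℂ} {f l : ℂ → ℂ} (hU : IsOpen U)
    (hl : DifferentiableOn ℂ l U) (hexp : ∀ z ∈ U, exp (l z) = f z) :
    EqOn (logDeriv f) (deriv l) U := fun z hz => by
  have hlz : DifferentiableAt ℂ l z := hl.differentiableAt (hU.mem_nhds hz)
  have hloc : f =ᶠ[𝓝 z] exp ∘ l := by
    filter_upwards [hU.mem_nhds hz] with w hw using (hexp w hw).symm
  rw [(logDeriv_congr_nhds hloc).eq_of_nhds, logDeriv_comp differentiableAt_exp hlz, logDeriv_exp,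
    Pi.one_apply, one_mul]

lemma norm_deriv_le_of_cosh_sq_ne_intCast (hg : DifferentiableOn ℂ g ℍₒ)
    (hne : ∀ z ∈ ℍₒ, ∀ n : ℤ, cosh (g z) ^ 2 ≠ n) {z : ℂ} (hz : z ∈ ℍₒ) :
    ‖deriv g z‖ ≤ (384 : ℕ) / z.im := by
  have homit : ∀ w, ¬ ball w 4 ⊆ g '' ℍₒ := fun w hw => by
    obtain ⟨v, hv, n, hn⟩ := exists_mem_ball_cosh_sq_eq_intCast w
    obtain ⟨z, hz, rfl⟩ := hw hv
    exact hne z hz n hn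
  exact (norm_deriv_le_div_im hg homit hz).trans_eq (by norm_num)

lemma exists_hasGrowth_deriv_cosh_sq (hg : DifferentiableOn ℂ g ℍₒ)
    (hne : ∀ z ∈ ℍₒ, ∀ n : ℤ, cosh (g z) ^ 2 ≠ n) :
    ∃ d, HasGrowth d (deriv fun z => cosh (g z) ^ 2) := by
  have hderiv : ∀ z ∈ ℍₒ, ‖deriv g z‖ ≤ (384 : ℕ) / z.im := fun z hz =>
    norm_deriv_le_of_cosh_sq_ne_intCast hg hne hz
  have hgrowth := hasGrowth_exp_norm_of_norm_deriv_le_div_im hg hderiv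
  have hcosh : HasGrowth 384 fun z => cosh (g z) := hgrowth.trans_norm_le fun z _ => by
    simpa using norm_cosh_le (g z)
  have hsinh : HasGrowth 384 fun z => sinh (g z) := hgrowth.trans_norm_le fun z _ => by
    simpa using norm_sinh_le (g z)
  have hg' : HasGrowth (-1) (deriv g) := .of_norm_le (n := 1) (C := (384 : ℕ)) fun z hz => by
    rw [← inv_im_eq_growthWeight, ← div_eq_mul_inv]
    exact hderiv z hz
  refine ⟨_, (((hcosh.mul hsinh).mul hg').const_mul 2).congr fun z hz => ?_⟩
  have hgz : HasDerivAt g (deriv g z) z :=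
    (hg.differentiableAt (UpperHalfPlane.isOpen_upperHalfPlaneSet.mem_nhds hz)).hasDerivAt
  rw [(hgz.ccosh.fun_pow 2).deriv]
  push_cast
  ring

theorem exists_hasGrowth_logDeriv {f : ℂ → ℂ} (hf : DifferentiableOn ℂ f ℍₒ)
    (hf₀ : ∀ z ∈ ℍₒ, f z ≠ 0) (hf₁ : ∀ z ∈ ℍₒ, f z ≠ 1) : ∃ d, HasGrowth d (logDeriv f) := by
  have hopen := UpperHalfPlane.isOpen_upperHalfPlaneSet
  obtain ⟨g, hg, hexp⟩ := exists_differentiableOn_exp_cosh_sq_eq hopen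
    isSimplyConnected_upperHalfPlaneSet hf hf₀ hf₁
  obtain ⟨d, hd⟩ := exists_hasGrowth_deriv_cosh_sq hg fun z hz n hn =>
    hf₁ z hz (by rw [← hexp z hz, hn, mul_comm, exp_int_mul_two_pi_mul_I])
  refine ⟨d, (hd.const_mul (2 * Real.pi * I)).congr fun z hz => ?_⟩
  rw [logDeriv_of_eqOn_exp hopen (by fun_prop) hexp hz, deriv_const_mul_field]

end Landau

section BorelCaratheodory

lemma cayley_mem_upperHalfPlaneSet {ζ : ℂ} (hζ : ζ ∈ ball (0 : ℂ) 1) :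
    I * (1 + ζ) / (1 - ζ) ∈ ℍₒ := by
  have hζ' : ‖ζ‖ < 1 := mem_ball_zero_iff.1 hζ
  have hne : 1 - ζ ≠ 0 := fun h => by simp [← sub_eq_zero.1 h] at hζ'
  have him : (I * (1 + ζ) / (1 - ζ)).im = (1 - ‖ζ‖ ^ 2) / normSq (1 - ζ) := by
    rw [Complex.sq_norm, div_im, normSq_apply ζ]
    simp
    ring
  have hpos : 0 < (I * (1 + ζ) / (1 - ζ)).im := by
    rw [him]
    exact div_pos (by nlinarith [norm_nonneg ζ]) (normSq_pos.2 hne)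
  exact hpos

lemma differentiableOn_cayley :
    DifferentiableOn ℂ (fun ζ : ℂ => I * (1 + ζ) / (1 - ζ)) (ball 0 1) := fun ζ hζ => by
  have : 1 - ζ ≠ 0 := fun h => by simp [← sub_eq_zero.1 h] at hζ
  exact DifferentiableAt.differentiableWithinAt (by fun_prop (disch := assumption))

lemma one_le_norm_add_I {z : ℂ} (hz : z ∈ ℍₒ) : 1 ≤ ‖z + I‖ := by
  have hy : 0 < z.im := hz
  have him := im_le_norm (z + I)
  rw [add_im, I_im] at him
  linarith

lemma add_I_ne_zero {z : ℂ} (hz : z ∈ ℍₒ) : z + I ≠ 0 :=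
  norm_pos_iff.1 (one_pos.trans_le (one_le_norm_add_I hz))

lemma cayley_sub_I_div_add_I {z : ℂ} (hz : z ∈ ℍₒ) :
    I * (1 + (z - I) / (z + I)) / (1 - (z - I) / (z + I)) = z := by
  have hne := add_I_ne_zero hz
  have hsub : 1 - (z - I) / (z + I) = 2 * I / (z + I) := by field_simp; ring
  rw [hsub]
  field_simp
  ring

lemma norm_add_I_sq_sub_norm_sub_I_sq (z : ℂ) : ‖z + I‖ ^ 2 - ‖z - I‖ ^ 2 = 4 * z.im := by
  simp only [Complex.sq_norm, normSq_apply, add_re, add_im, sub_re, sub_im, I_re, I_im]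
  ring

lemma norm_sub_I_lt_norm_add_I {z : ℂ} (hz : z ∈ ℍₒ) : ‖z - I‖ < ‖z + I‖ := by
  have hy : 0 < z.im := hz
  nlinarith [norm_add_I_sq_sub_norm_sub_I_sq z, norm_nonneg (z - I), norm_nonneg (z + I)]

lemma norm_sub_I_div_norm_add_I_sub_norm_sub_I_le {z : ℂ} (hz : z ∈ ℍₒ) :
    2 * ‖z - I‖ / (‖z + I‖ - ‖z - I‖) ≤ (1 + ‖z‖) ^ 2 / z.im := by
  have hy : 0 < z.im := hz
  have hlt := norm_sub_I_lt_norm_add_I hz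
  have hle : ‖z + I‖ ≤ 1 + ‖z‖ := by
    linarith [norm_add_le z I, norm_I]
  rw [div_le_div_iff₀ (sub_pos.2 hlt) hy]
  calc 2 * ‖z - I‖ * z.im
      = (‖z + I‖ - ‖z - I‖) * (‖z - I‖ * (‖z + I‖ + ‖z - I‖) / 2) := by
        linear_combination -(‖z - I‖ / 2) * norm_add_I_sq_sub_norm_sub_I_sq z
    _ ≤ (‖z + I‖ - ‖z - I‖) * (1 + ‖z‖) ^ 2 := by
        gcongr
        nlinarith [norm_nonneg (z - I)]
    _ = (1 + ‖z‖) ^ 2 * (‖z + I‖ - ‖z - I‖) := mul_comm _ _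

lemma norm_sub_le_of_re_le {f : ℂ → ℂ} {a : ℝ} (hf : DifferentiableOn ℂ f ℍₒ)
    (hre : ∀ z ∈ ℍₒ, (f z).re ≤ a) (hI : (f I).re < a) {z : ℂ} (hz : z ∈ ℍₒ) :
    ‖f z - f I‖ ≤ (a - (f I).re) * (1 + ‖z‖) ^ 2 / z.im := by
  have hnorm : 0 < ‖z + I‖ := norm_pos_iff.2 (add_I_ne_zero hz)
  have hlt := norm_sub_I_lt_norm_add_I hz
  have hbc := borelCaratheodory_zero (f := fun ζ => f (I * (1 + ζ) / (1 - ζ)) - f I) (R := 1)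
    (sub_pos.2 hI)
    ((hf.comp differentiableOn_cayley fun ζ => cayley_mem_upperHalfPlaneSet).sub_const _)
    (fun ζ hζ => by simpa using hre _ (cayley_mem_upperHalfPlaneSet hζ))
    one_pos (z := (z - I) / (z + I)) (by simpa [div_lt_one hnorm] using hlt) (by simp)
  rw [cayley_sub_I_div_add_I hz, norm_div] at hbc
  calc ‖f z - f I‖
      ≤ 2 * (a - (f I).re) * (‖z - I‖ / ‖z + I‖) / (1 - ‖z - I‖ / ‖z + I‖) := hbc
    _ = (a - (f I).re) * (2 * ‖z - I‖ / (‖z + I‖ - ‖z - I‖)) := by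
        rw [one_sub_div hnorm.ne']
        field_simp
    _ ≤ (a - (f I).re) * ((1 + ‖z‖) ^ 2 / z.im) := mul_le_mul_of_nonneg_left
        (norm_sub_I_div_norm_add_I_sub_norm_sub_I_le hz) (sub_pos.2 hI).le
    _ = (a - (f I).re) * (1 + ‖z‖) ^ 2 / z.im := (mul_div_assoc _ _ _).symm

end BorelCaratheodory

section LogGrowth

lemma norm_sub_I_mul_le_norm {z : ℂ} {δ : ℝ} (hδ : 0 ≤ δ) (hz : δ ≤ z.im) :
    ‖z - δ * I‖ ≤ ‖z‖ := by
  rw [norm_def, norm_def]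
  refine Real.sqrt_le_sqrt ?_
  simp only [normSq_apply, sub_re, sub_im, mul_re, mul_im, ofReal_re, ofReal_im, I_re, I_im]
  nlinarith

lemma norm_sub_le_of_re_le_of_lt_im {f : ℂ → ℂ} {a δ : ℝ} (hf : DifferentiableOn ℂ f ℍₒ)
    (hδ : 0 < δ) (hre : ∀ z, δ < z.im → (f z).re ≤ a) (hI : (f (I + δ * I)).re < a)
    {z : ℂ} (hz : δ < z.im) :
    ‖f z - f (I + δ * I)‖ ≤ (a - (f (I + δ * I)).re) * (1 + ‖z‖) ^ 2 / (z.im - δ) := by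
  have him (u : ℂ) : (u + δ * I).im = u.im + δ := by simp
  have hshift : MapsTo (fun u : ℂ => u + δ * I) ℍₒ ℍₒ := fun u (hu : 0 < u.im) =>
    show 0 < (u + δ * I).im by rw [him]; positivity
  have him' : (z - δ * I).im = z.im - δ := by simp
  have hz' : z - δ * I ∈ ℍₒ := show 0 < (z - δ * I).im by rw [him']; exact sub_pos.2 hz
  have h := norm_sub_le_of_re_le (f := fun u => f (u + δ * I)) (a := a)
    (hf.comp (by fun_prop) hshift)
    (fun u (hu : 0 < u.im) => hre _ (by rw [him]; linarith)) hI hz'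
  simp only [sub_add_cancel, him'] at h
  refine h.trans ?_
  gcongr
  exact norm_sub_I_mul_le_norm hδ.le hz.le

lemma exists_norm_le_of_le_one_half {f : ℂ → ℂ} (hf : ContinuousOn f ℍₒ) :
    ∃ B, ∀ δ : ℝ, 0 ≤ δ → δ ≤ 1 / 2 → ‖f (I + δ * I)‖ ≤ B := by
  have hsub : MapsTo (fun δ : ℝ => I + δ * I) (Icc 0 (1 / 2)) ℍₒ := fun δ hδ =>
    show 0 < (I + δ * I).im by simpa using by linarith [hδ.1]
  obtain ⟨B, hB⟩ := isCompact_Icc.exists_bound_of_continuousOn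
    (hf.comp (by fun_prop) hsub)
  exact ⟨B, fun δ h₀ h₁ => hB δ ⟨h₀, h₁⟩⟩

lemma re_le_div_of_lt_im {f : ℂ → ℂ} {C δ : ℝ} (hre : ∀ z ∈ ℍₒ, (f z).re ≤ C * (1 + 1 / z.im))
    (hδ₀ : 0 < δ) (hδ₁ : δ ≤ 1) {z : ℂ} (hz : δ < z.im) : (f z).re ≤ 2 * |C| / δ := by
  have hy : 0 < z.im := hδ₀.trans hz
  calc (f z).re ≤ C * (1 + 1 / z.im) := hre z hy
    _ ≤ |C| * (1 / δ + 1 / δ) := by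
        gcongr
        · exact le_abs_self C
        · exact (one_le_div hδ₀).2 hδ₁
    _ = 2 * |C| / δ := by ring

lemma exists_norm_le_of_two_mul_le_im {f : ℂ → ℂ} {C : ℝ} (hf : DifferentiableOn ℂ f ℍₒ)
    (hre : ∀ z ∈ ℍₒ, (f z).re ≤ C * (1 + 1 / z.im)) :
    ∃ K, 0 < K ∧ ∀ (z : ℂ) (δ : ℝ), 0 < δ → δ ≤ 1 / 2 → 2 * δ ≤ z.im →
      ‖f z‖ ≤ K + 4 * K * (1 + ‖z‖) ^ 2 / (δ * z.im) := by
  obtain ⟨B, hB⟩ := exists_norm_le_of_le_one_half hf.continuousOn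
  have hB₀ : 0 ≤ B := (norm_nonneg _).trans (hB 0 le_rfl (by norm_num))
  refine ⟨2 * |C| + B + 1, by positivity, fun z δ hδ₀ hδ_half hδ_im => ?_⟩
  set K : ℝ := 2 * |C| + B + 1 with hK
  have hK₀ : 0 < K := by positivity
  have hy : 0 < z.im := by linarith
  have hI : ‖f (I + δ * I)‖ ≤ B := hB δ hδ₀.le hδ_half
  have hre_I := abs_le.1 ((abs_re_le_norm _).trans hI)
  have hBK : B + 1 ≤ K / δ := by
    rw [le_div_iff₀ hδ₀]
    nlinarith [hK, abs_nonneg C]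
  have hmain := norm_sub_le_of_re_le_of_lt_im (a := K / δ) hf hδ₀
    (fun u hu => (re_le_div_of_lt_im hre hδ₀ (by linarith) hu).trans (by gcongr; linarith))
    (by linarith) (z := z) (by linarith)
  calc ‖f z‖ ≤ ‖f (I + δ * I)‖ + ‖f z - f (I + δ * I)‖ := norm_le_norm_add_norm_sub' _ _
    _ ≤ K + (K / δ + K / δ) * (1 + ‖z‖) ^ 2 / (z.im / 2) := by
        refine add_le_add (by linarith [abs_nonneg C]) (hmain.trans ?_)
        gcongr <;> linarith
    _ = K + 4 * K * (1 + ‖z‖) ^ 2 / (δ * z.im) := by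
        field_simp
        ring

/- The real part is `O(1 / δ)` on `Im u > δ`, so Borel–Carathéodory applies to that half-plane; the
choice `δ = Im z / (2 (1 + ‖z‖))` keeps `δ ≤ 1 / 2` and costs only a power of `(1 + ‖z‖) / Im z`. -/
lemma hasGrowth_one_of_re_le {f : ℂ → ℂ} {C : ℝ} (hf : DifferentiableOn ℂ f ℍₒ)
    (hre : ∀ z ∈ ℍₒ, (f z).re ≤ C * (1 + 1 / z.im)) : HasGrowth 1 f := by
  obtain ⟨K, hK, hbound⟩ := exists_norm_le_of_two_mul_le_im hf hre
  refine HasGrowth.of_norm_le (n := 2) (C := 9 * K) fun z hz => ?_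
  have hy : 0 < z.im := hz
  have hR : 1 ≤ 1 + ‖z‖ := by simp
  set δ : ℝ := z.im / (2 * (1 + ‖z‖)) with hδ
  have hδ₀ : 0 < δ := by positivity
  have hδ_half : δ ≤ 1 / 2 := by
    rw [hδ, div_le_iff₀ (by positivity)]
    linarith [im_le_norm z]
  have hδ_im : 2 * δ ≤ z.im := by
    rw [hδ, mul_div_assoc', mul_div_mul_left _ _ two_ne_zero]
    exact div_le_self hy.le hR
  have hweight : growthWeight 0 0 z ≤ growthWeight 1 2 z :=
    growthWeight_le_growthWeight (zero_le_one' ℤ) (Nat.zero_le 2) hz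
  calc ‖f z‖ ≤ K + 4 * K * (1 + ‖z‖) ^ 2 / (δ * z.im) := hbound z δ hδ₀ hδ_half hδ_im
    _ = K * growthWeight 0 0 z + 8 * K * growthWeight 1 2 z := by
        rw [growthWeight, growthWeight, hδ]
        field_simp
        ring
    _ ≤ K * growthWeight 1 2 z + 8 * K * growthWeight 1 2 z := by gcongr
    _ = 9 * K * growthWeight 1 2 z := by ring

end LogGrowth

section LogDeriv

lemma one_add_norm_le_two_mul_norm_add_I {z : ℂ} (hz : z ∈ ℍₒ) : 1 + ‖z‖ ≤ 2 * ‖z + I‖ := by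
  have hy : 0 < z.im := hz
  have hle := norm_sub_I_mul_le_norm (z := z + I) zero_le_one (by simpa using hy.le)
  rw [ofReal_one, one_mul, add_sub_cancel_right] at hle
  linarith [one_le_norm_add_I hz]

lemma hasGrowth_one_of_norm_exp_le {l : ℂ → ℂ} {C : ℝ} {n : ℕ} (hl : DifferentiableOn ℂ l ℍₒ)
    (hexp : ∀ z ∈ ℍₒ, ‖exp (l z)‖ ≤ C / z.im ^ n) : HasGrowth 1 l := by
  refine hasGrowth_one_of_re_le (C := |Real.log C| + n) hl fun z hz => ?_
  have hy : 0 < z.im := hz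
  have hpos : 0 < C / z.im ^ n := (norm_pos_iff.2 (exp_ne_zero _)).trans_le (hexp z hz)
  have hC : 0 < C := (div_pos_iff_of_pos_right (by positivity)).1 hpos
  have hlog : -Real.log z.im ≤ 1 / z.im - 1 := by
    simpa only [one_div, Real.log_inv] using Real.log_le_sub_one_of_pos (inv_pos.2 hy)
  calc (l z).re = Real.log ‖exp (l z)‖ := by rw [norm_exp, Real.log_exp]
    _ ≤ Real.log (C / z.im ^ n) := Real.log_le_log (norm_pos_iff.2 (exp_ne_zero _)) (hexp z hz)
    _ = Real.log C + n * -Real.log z.im := by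
        rw [Real.log_div hC.ne' (by positivity), Real.log_pow]
        ring
    _ ≤ |Real.log C| * (1 + 1 / z.im) + n * (1 + 1 / z.im) := by
        gcongr
        · exact (le_abs_self _).trans (le_mul_of_one_le_right (abs_nonneg _) (by simp [hy.le]))
        · linarith
    _ = (|Real.log C| + n) * (1 + 1 / z.im) := by ring

lemma hasGrowth_logDeriv_of_norm_le {f : ℂ → ℂ} {C : ℝ} {n : ℕ} (hf : DifferentiableOn ℂ f ℍₒ)
    (hf₀ : ∀ z ∈ ℍₒ, f z ≠ 0) (hle : ∀ z ∈ ℍₒ, ‖f z‖ ≤ C / z.im ^ n) :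
    HasGrowth 0 (logDeriv f) := by
  obtain ⟨l, hl, hexp⟩ := exists_differentiableOn_exp_eq UpperHalfPlane.isOpen_upperHalfPlaneSet
    isSimplyConnected_upperHalfPlaneSet hf hf₀
  have hgrowth : HasGrowth 1 l :=
    hasGrowth_one_of_norm_exp_le hl fun z hz => (hexp z hz).symm ▸ hle z hz
  exact (hgrowth.deriv hl).congr
    (logDeriv_of_eqOn_exp UpperHalfPlane.isOpen_upperHalfPlaneSet hl hexp)

lemma hasGrowth_logDeriv_add_I_pow (m : ℕ) : HasGrowth 0 (logDeriv fun z : ℂ => (z + I) ^ m) := by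
  refine HasGrowth.of_norm_le (n := 0) (C := m) fun z hz => ?_
  have hderiv : logDeriv (fun z : ℂ => (z + I) ^ m) z = m * (z + I)⁻¹ := by
    rw [logDeriv_fun_pow (by fun_prop), logDeriv_apply, deriv_add_const, deriv_id'', one_div]
  rw [hderiv, norm_mul, norm_natCast, norm_inv, growthWeight, zpow_zero, pow_zero, one_mul]
  gcongr
  exact inv_le_one_of_one_le₀ (one_le_norm_add_I hz)

lemma norm_div_add_I_pow_le {d : ℤ} {n : ℕ} {C : ℝ} {w z : ℂ} (hC : 0 ≤ C) (hz : z ∈ ℍₒ)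
    (hw : ‖w‖ ≤ C * growthWeight d n z) :
    ‖w / (z + I) ^ (d + n).toNat‖ ≤ C * 2 ^ (d + n).toNat / z.im ^ n := by
  have hy : 0 < z.im := hz
  set m := (d + n).toNat
  have hnorm : 0 < ‖z + I‖ := norm_pos_iff.2 (add_I_ne_zero hz)
  rw [norm_div, norm_pow, div_le_iff₀ (by positivity)]
  calc ‖w‖ ≤ C * growthWeight d n z := hw
    _ = C * (1 + ‖z‖) ^ (d + n) / z.im ^ n := by
        rw [growthWeight, zpow_add₀ (by positivity), zpow_natCast, div_pow]
        ring
    _ ≤ C * (1 + ‖z‖) ^ (m : ℤ) / z.im ^ n := by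
        gcongr
        · simp
        · exact Int.self_le_toNat _
    _ ≤ C * (2 * ‖z + I‖) ^ m / z.im ^ n := by
        rw [zpow_natCast]
        gcongr
        exact one_add_norm_le_two_mul_norm_add_I hz
    _ = C * 2 ^ m / z.im ^ n * ‖z + I‖ ^ m := by
        rw [mul_pow]
        ring

protected lemma HasGrowth.logDeriv {d : ℤ} {f : ℂ → ℂ} (hgrowth : HasGrowth d f)
    (hf : DifferentiableOn ℂ f ℍₒ) (hf₀ : ∀ z ∈ ℍₒ, f z ≠ 0) :
    HasGrowth 0 (logDeriv f) := by
  obtain ⟨n, C, hC, hle⟩ := hgrowth.exists_norm_le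
  set m := (d + n).toNat
  have hpow : ∀ z ∈ ℍₒ, (z + I) ^ m ≠ 0 := fun z hz => pow_ne_zero m (add_I_ne_zero hz)
  have hquot : HasGrowth 0 (_root_.logDeriv fun z => f z / (z + I) ^ m) :=
    hasGrowth_logDeriv_of_norm_le (hf.fun_div (by fun_prop) hpow)
      (fun z hz => div_ne_zero (hf₀ z hz) (hpow z hz))
      fun z hz => norm_div_add_I_pow_le hC.le hz (hle z hz)
  refine (hquot.add (hasGrowth_logDeriv_add_I_pow m)).congr fun z hz => ?_
  have hfz := hf.differentiableAt (UpperHalfPlane.isOpen_upperHalfPlaneSet.mem_nhds hz)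
  have hdiv := logDeriv_div (g := fun z => (z + I) ^ m) z (hf₀ z hz) (hpow z hz) hfz (by fun_prop)
  simp only [hdiv, sub_add_cancel]

end LogDeriv

section Wronskian

/-- `w` is an entire solution of the equation `w'' + A w = 0`. -/
structure IsSolution (A w : ℂ → ℂ) : Prop where
  differentiable : Differentiable ℂ w
  deriv_deriv_add : ∀ z, deriv (deriv w) z + A z * w z = 0

/-- The Wronskian `f g' - g f'` of two functions, used to detect their linear dependence. -/
noncomputable def wronskian (f g : ℂ → ℂ) (z : ℂ) : ℂ :=
  f z * deriv g z - g z * deriv f z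

lemma wronskian_cyclic (f g h : ℂ → ℂ) (z : ℂ) :
    wronskian g h z * f z - wronskian f h z * g z + wronskian f g z * h z = 0 := by
  simp only [wronskian]
  ring

lemma logDeriv_sub_logDeriv {f g : ℂ → ℂ} {z : ℂ} (hf : f z ≠ 0) (hg : g z ≠ 0) :
    logDeriv f z - logDeriv g z = -wronskian f g z * (f z * g z)⁻¹ := by
  rw [logDeriv_apply, logDeriv_apply, wronskian]
  field_simp
  ring

lemma exists_eq_const_mul_of_wronskian_eq_zero {f g : ℂ → ℂ} (hf : Differentiable ℂ f)
    (hg : Differentiable ℂ g) (hW : ∀ z, wronskian f g z = 0) {z₀ : ℂ} (hz₀ : g z₀ ≠ 0) :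
    ∃ c, ∀ z, f z = c * g z := by
  obtain ⟨ε, hε, hne⟩ := eventually_nhds_iff_ball.1 (hg.continuous.continuousAt.eventually_ne hz₀)
  have hquot : ∀ z ∈ ball z₀ ε, HasDerivAt (fun z => f z / g z) 0 z := fun z hz => by
    refine ((hf z).hasDerivAt.fun_div (hg z).hasDerivAt (hne z hz)).congr_deriv ?_
    rw [div_eq_zero_iff]
    exact .inl (by rw [← neg_eq_zero, neg_sub, mul_comm (deriv f z)]; exact hW z)
  have hconst : ∀ z ∈ ball z₀ ε, f z / g z = f z₀ / g z₀ := fun z hz =>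
    isOpen_ball.is_const_of_deriv_eq_zero (convex_ball z₀ ε).isPreconnected
      (fun w hw => (hquot w hw).differentiableAt.differentiableWithinAt)
      (fun w hw => (hquot w hw).deriv) hz (mem_ball_self hε)
  refine ⟨f z₀ / g z₀, fun z => congrFun (AnalyticOnNhd.eq_of_eventuallyEq (z₀ := z₀)
    (fun z _ => hf.analyticAt z) (fun z _ => (hg.const_mul _).analyticAt z) ?_) z⟩
  filter_upwards [ball_mem_nhds z₀ hε] with z hz
  rw [← hconst z hz, div_mul_cancel₀ _ (hne z hz)]

lemma LinIndepPair.symm {f g : ℂ → ℂ} (h : LinIndepPair f g) : LinIndepPair g f :=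
  And.symm h

lemma LinIndepPair.comp_neg {f g : ℂ → ℂ} (h : LinIndepPair f g) :
    LinIndepPair (fun z => f (-z)) fun z => g (-z) :=
  ⟨fun ⟨c, hc⟩ => h.1 ⟨c, fun z => by simpa using hc (-z)⟩,
    fun ⟨c, hc⟩ => h.2 ⟨c, fun z => by simpa using hc (-z)⟩⟩

lemma LinIndepPair.exists_ne_zero {f g : ℂ → ℂ} (h : LinIndepPair f g) : ∃ z, g z ≠ 0 := by
  by_contra! hg
  exact h.2 ⟨0, fun z => by rw [hg z, zero_mul]⟩

namespace IsSolution

variable {A f g h : ℂ → ℂ}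

lemma comp_neg (hf : IsSolution A f) : IsSolution (fun z => A (-z)) fun z => f (-z) := by
  refine ⟨hf.differentiable.comp differentiable_neg, fun z => ?_⟩
  have hderiv : deriv (fun z => f (-z)) = fun z => -deriv f (-z) := funext fun z =>
    deriv_comp_neg f z
  rw [hderiv, deriv.fun_neg, deriv_comp_neg (deriv f) z, neg_neg]
  exact hf.deriv_deriv_add (-z)

lemma wronskian_eq (hf : IsSolution A f) (hg : IsSolution A g) (z₁ z₂ : ℂ) :
    wronskian f g z₁ = wronskian f g z₂ := by
  have hf' : Differentiable ℂ (deriv f) := hf.differentiable.deriv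
  have hg' : Differentiable ℂ (deriv g) := hg.differentiable.deriv
  refine is_const_of_deriv_eq_zero (f := wronskian f g)
    ((hf.differentiable.mul hg').sub (hg.differentiable.mul hf')) (fun z => ?_) z₁ z₂
  have hderiv : HasDerivAt (wronskian f g) _ z :=
    ((hf.differentiable z).hasDerivAt.fun_mul (hg' z).hasDerivAt).fun_sub
      ((hg.differentiable z).hasDerivAt.fun_mul (hf' z).hasDerivAt)
  rw [hderiv.deriv]
  linear_combination f z * hg.deriv_deriv_add z - g z * hf.deriv_deriv_add z

lemma wronskian_ne_zero (hf : IsSolution A f) (hg : IsSolution A g) (hfg : LinIndepPair f g)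
    (z : ℂ) : wronskian f g z ≠ 0 := fun hz => by
  obtain ⟨z₀, hz₀⟩ := hfg.exists_ne_zero
  exact hfg.1 (exists_eq_const_mul_of_wronskian_eq_zero hf.differentiable hg.differentiable
    (fun w => (hf.wronskian_eq hg w z).trans hz) hz₀)

end IsSolution

end Wronskian

section ZeroFreeTriple

/-- Three pairwise linearly independent solutions of `w'' + A w = 0` without zeros in the upper
half-plane. Solutions with only real zeros give such triples for `A z` and for `A (-z)`. -/
structure IsZeroFreeTriple (A f g h : ℂ → ℂ) : Prop where
  isSolution_fst : IsSolution A f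
  isSolution_snd : IsSolution A g
  isSolution_trd : IsSolution A h
  indep_fst_snd : LinIndepPair f g
  indep_fst_trd : LinIndepPair f h
  indep_snd_trd : LinIndepPair g h
  fst_ne_zero : ∀ z ∈ ℍₒ, f z ≠ 0
  snd_ne_zero : ∀ z ∈ ℍₒ, g z ≠ 0
  trd_ne_zero : ∀ z ∈ ℍₒ, h z ≠ 0

lemma IsSolution.deriv_logDeriv {A f : ℂ → ℂ} (hf : IsSolution A f) {z : ℂ} (hz : f z ≠ 0) :
    deriv (logDeriv f) z = -A z - logDeriv f z ^ 2 := by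
  have hderiv := (hf.differentiable.deriv z).hasDerivAt.div (hf.differentiable z).hasDerivAt hz
  rw [logDeriv, hderiv.deriv, eq_neg_of_add_eq_zero_left (hf.deriv_deriv_add z)]
  simp only [Pi.div_apply]
  field_simp

namespace IsZeroFreeTriple

variable {A f g h : ℂ → ℂ} (T : IsZeroFreeTriple A f g h)

include T

lemma swap_snd_trd : IsZeroFreeTriple A f h g :=
  ⟨T.isSolution_fst, T.isSolution_trd, T.isSolution_snd, T.indep_fst_trd, T.indep_fst_snd,
    T.indep_snd_trd.symm, T.fst_ne_zero, T.trd_ne_zero, T.snd_ne_zero⟩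

lemma rotate : IsZeroFreeTriple A g h f :=
  ⟨T.isSolution_snd, T.isSolution_trd, T.isSolution_fst, T.indep_snd_trd, T.indep_fst_snd.symm,
    T.indep_fst_trd.symm, T.snd_ne_zero, T.trd_ne_zero, T.fst_ne_zero⟩

lemma wronskian_mul_ne_wronskian_mul {z : ℂ} (hz : z ∈ ℍₒ) :
    wronskian g h z * f z ≠ wronskian f h z * g z := fun heq => by
  have hrel := wronskian_cyclic f g h z
  rw [heq, sub_self, zero_add] at hrel
  exact mul_ne_zero (T.isSolution_fst.wronskian_ne_zero T.isSolution_snd T.indep_fst_snd z)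
    (T.trd_ne_zero z hz) hrel

lemma exists_hasGrowth_inv_mul : ∃ d, HasGrowth d fun z => (f z * g z)⁻¹ := by
  have ⟨hf, hg, hh, hfg, hfh, hgh, hf₀, hg₀, _⟩ := T
  have hfd := hf.differentiable
  have hgd := hg.differentiable
  have hWfg := hf.wronskian_ne_zero hg hfg 0
  have hWfh := hf.wronskian_ne_zero hh hfh 0
  set c := wronskian g h 0 / wronskian f h 0 with hc
  have hc₀ : c ≠ 0 := div_ne_zero (hg.wronskian_ne_zero hh hgh 0) hWfh
  have homit : ∀ z ∈ ℍₒ, c * (f z / g z) ≠ 1 := fun z hz hone => by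
    rw [hc, div_mul_div_comm, div_eq_one_iff_eq (mul_ne_zero hWfh (hg₀ z hz)),
      hg.wronskian_eq hh 0 z, hf.wronskian_eq hh 0 z] at hone
    exact T.wronskian_mul_ne_wronskian_mul hz hone
  obtain ⟨d, hd⟩ := exists_hasGrowth_logDeriv (f := fun z => c * (f z / g z))
    ((hfd.differentiableOn.fun_div hgd.differentiableOn hg₀).const_mul c)
    (fun z hz => mul_ne_zero hc₀ (div_ne_zero (hf₀ z hz) (hg₀ z hz))) homit
  refine ⟨d, (hd.const_mul (-wronskian f g 0)⁻¹).congr fun z hz => ?_⟩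
  have hlog : logDeriv (fun z => c * (f z / g z)) z = -wronskian f g 0 * (f z * g z)⁻¹ := by
    rw [logDeriv_const_mul (f := fun z => f z / g z) z c hc₀,
      logDeriv_div z (hf₀ z hz) (hg₀ z hz) (hfd z) (hgd z),
      logDeriv_sub_logDeriv (hf₀ z hz) (hg₀ z hz), hf.wronskian_eq hg z 0]
  simp only [hlog, inv_mul_cancel_left₀ (neg_ne_zero.2 hWfg)]

lemma hasGrowth_logDeriv_add_logDeriv : HasGrowth 0 fun z => logDeriv f z + logDeriv g z := by
  have hfd := T.isSolution_fst.differentiable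
  have hgd := T.isSolution_snd.differentiable
  have hf₀ := T.fst_ne_zero
  have hg₀ := T.snd_ne_zero
  have hfg₀ : ∀ z ∈ ℍₒ, f z * g z ≠ 0 := fun z hz => mul_ne_zero (hf₀ z hz) (hg₀ z hz)
  obtain ⟨d, hd⟩ := T.exists_hasGrowth_inv_mul
  have hgrowth := hd.logDeriv ((hfd.mul hgd).differentiableOn.fun_inv hfg₀)
    fun z hz => inv_ne_zero (hfg₀ z hz)
  refine hgrowth.neg.congr fun z hz => ?_
  have hinv := logDeriv_fun_zpow ((hfd.fun_mul hgd) z) (-1)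
  simp only [zpow_neg_one, Int.cast_neg, Int.cast_one, neg_one_mul] at hinv
  simp only [hinv, neg_neg, logDeriv_mul z (hf₀ z hz) (hg₀ z hz) (hfd z) (hgd z)]

lemma hasGrowth_logDeriv : HasGrowth 0 (logDeriv f) := by
  have hfg := T.hasGrowth_logDeriv_add_logDeriv
  have hfh := T.swap_snd_trd.hasGrowth_logDeriv_add_logDeriv
  have hgh := T.rotate.hasGrowth_logDeriv_add_logDeriv
  refine (((hfg.add hfh).sub hgh).const_mul (1 / 2)).congr fun z _ => ?_
  ring

lemma hasGrowth_coefficient : HasGrowth 0 A := by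
  have hf := T.isSolution_fst
  have hs := T.hasGrowth_logDeriv
  have hdiff : DifferentiableOn ℂ (logDeriv f) ℍₒ :=
    hf.differentiable.deriv.differentiableOn.div hf.differentiable.differentiableOn T.fst_ne_zero
  refine (((hs.deriv hdiff).mono (by norm_num)).add (hs.mul hs)).neg.congr fun z hz => ?_
  simp only [hf.deriv_logDeriv (T.fst_ne_zero z hz)]
  ring

end IsZeroFreeTriple

end ZeroFreeTriple

section Liouville

lemma exists_norm_mul_abs_im_pow_le {f : ℂ → ℂ} (hf : HasGrowth 0 f)
    (hf' : HasGrowth 0 fun z => f (-z)) :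
    ∃ (n : ℕ) (C : ℝ), ∀ z, ‖f z‖ * |z.im| ^ n ≤ C * (1 + ‖z‖) ^ n := by
  have hboth : HasGrowth 0 fun z => ‖f z‖ + ‖f (-z)‖ :=
    (hf.trans_norm_le (g := fun z => ‖f z‖) (by simp)).add (hf'.trans_norm_le (by simp))
  obtain ⟨n, C, hC, hle⟩ := hboth.exists_norm_le
  have hupper : ∀ z ∈ ℍₒ, (‖f z‖ + ‖f (-z)‖) * |z.im| ^ (n + 1) ≤ C * (1 + ‖z‖) ^ (n + 1) := by
    intro z hz
    have hy : 0 < z.im := hz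
    have hweight := (hle z hz).trans (mul_le_mul_of_nonneg_left
      (growthWeight_le_growthWeight le_rfl n.le_succ hz) hC.le)
    rwa [growthWeight, zpow_zero, one_mul, div_pow, mul_div_assoc', le_div_iff₀ (by positivity),
      Real.norm_of_nonneg (add_nonneg (norm_nonneg _) (norm_nonneg _)), ← abs_of_pos hy] at hweight
  refine ⟨n + 1, C, fun z => ?_⟩
  rcases lt_trichotomy z.im 0 with hz | hz | hz
  · have h := hupper (-z) (show 0 < (-z).im by simpa using hz)
    rw [neg_neg, neg_im, abs_neg, norm_neg] at h
    refine le_trans ?_ h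
    gcongr
    exact le_add_of_nonneg_left (norm_nonneg _)
  · rw [hz, abs_zero, zero_pow n.succ_ne_zero, mul_zero]
    positivity
  · refine le_trans ?_ (hupper z hz)
    gcongr
    exact le_add_of_nonneg_right (norm_nonneg _)

lemma norm_sq_sub_norm_sq (u : ℂ) : ‖u ^ 2 - (‖u‖ : ℂ) ^ 2‖ = 2 * ‖u‖ * |u.im| := by
  have hfactor : u ^ 2 - (‖u‖ : ℂ) ^ 2 = (u - (starRingEnd ℂ) u) * u := by
    rw [← conj_mul']
    ring
  rw [hfactor, sub_conj]
  simp
  ring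

/- The maximum principle for `f u * (u² - R²) ^ n`: the factor vanishes at `u = ±R` and equals
`2 R |Im u|` in modulus on the circle `|u| = R`. -/
lemma norm_le_of_norm_mul_abs_im_pow_le {f : ℂ → ℂ} {n : ℕ} {C : ℝ} (hf : Differentiable ℂ f)
    (hle : ∀ z, ‖f z‖ * |z.im| ^ n ≤ C * (1 + ‖z‖) ^ n) (z : ℂ) : ‖f z‖ ≤ C * 8 ^ n := by
  have hC : 0 ≤ C :=
    le_trans (show (0 : ℝ) ≤ ‖f 0‖ * |(0 : ℂ).im| ^ n by positivity) (by simpa using hle 0)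
  set R : ℝ := 2 * ‖z‖ + 1 with hR
  have hR₁ : 1 ≤ R := by linarith [hR, norm_nonneg z]
  have hcircle : ∀ u ∈ frontier (ball (0 : ℂ) R),
      ‖f u * (u ^ 2 - (R : ℂ) ^ 2) ^ n‖ ≤ C * (2 * R) ^ n * (2 * R) ^ n := fun u hu => by
    rw [frontier_ball _ (zero_lt_one.trans_le hR₁).ne', mem_sphere_zero_iff_norm] at hu
    rw [← hu, norm_mul, norm_pow, norm_sq_sub_norm_sq, hu]
    calc ‖f u‖ * (2 * R * |u.im|) ^ n = ‖f u‖ * |u.im| ^ n * (2 * R) ^ n := by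
          rw [mul_pow, mul_right_comm, mul_assoc]
      _ ≤ C * (1 + ‖u‖) ^ n * (2 * R) ^ n := by gcongr ?_ * _; exact hle u
      _ ≤ C * (2 * R) ^ n * (2 * R) ^ n := by gcongr; linarith
  have hmax := norm_le_of_forall_mem_frontier_norm_le isBounded_ball
    (show Differentiable ℂ fun u => f u * (u ^ 2 - (R : ℂ) ^ 2) ^ n by fun_prop).diffContOnCl
    hcircle (subset_closure (mem_ball_zero_iff.2 (by linarith [norm_nonneg z]) : z ∈ ball 0 R))
  have hlower : R ^ 2 / 2 ≤ ‖z ^ 2 - (R : ℂ) ^ 2‖ := by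
    have hsub := norm_sub_norm_le ((R : ℂ) ^ 2) (z ^ 2)
    rw [norm_sub_rev, norm_pow, norm_pow, norm_real, Real.norm_of_nonneg (by positivity)] at hsub
    nlinarith [norm_nonneg z]
  refine le_of_mul_le_mul_right ?_ (show 0 < (R ^ 2 / 2) ^ n by positivity)
  calc ‖f z‖ * (R ^ 2 / 2) ^ n ≤ ‖f z * (z ^ 2 - (R : ℂ) ^ 2) ^ n‖ := by
        rw [norm_mul, norm_pow]
        gcongr
    _ ≤ C * (2 * R) ^ n * (2 * R) ^ n := hmax
    _ = C * 8 ^ n * (R ^ 2 / 2) ^ n := by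
        rw [mul_assoc, mul_assoc, ← mul_pow, ← mul_pow]
        congr 2
        ring

theorem exists_eq_const_of_hasGrowth_zero {f : ℂ → ℂ} (hf : Differentiable ℂ f)
    (hup : HasGrowth 0 f) (hdown : HasGrowth 0 fun z => f (-z)) : ∃ c, ∀ z, f z = c := by
  obtain ⟨n, C, hle⟩ := exists_norm_mul_abs_im_pow_le hup hdown
  have hbounded : Bornology.IsBounded (range f) :=
    isBounded_iff_forall_norm_le.2 ⟨C * 8 ^ n, forall_mem_range.2
      (norm_le_of_norm_mul_abs_im_pow_le hf hle)⟩
  exact ⟨f 0, fun z => hf.apply_eq_apply_of_bounded hbounded z 0⟩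

end Liouville

section RealZeros

variable {w : ℂ → ℂ} (hw : ∀ z, w z = 0 → z.im = 0)

include hw

lemma ne_zero_of_real_zeros : ∀ z ∈ ℍₒ, w z ≠ 0 := fun z hz h =>
  (show 0 < z.im from hz).ne' (hw z h)

lemma real_zeros_comp_neg : ∀ z, w (-z) = 0 → z.im = 0 := fun z h => by
  simpa using hw (-z) h

end RealZeros

/-- If the equation `w'' + A·w = 0` with entire coefficient `A` has three pairwise
linearly independent entire solutions, each with only real zeros, then `A` is constant. -/
theorem stmt3 (A w₁ w₂ w₃ : ℂ → ℂ) (hA : Differentiable ℂ A)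
    (h₁ : Differentiable ℂ w₁) (h₂ : Differentiable ℂ w₂) (h₃ : Differentiable ℂ w₃)
    (hsol₁ : ∀ z : ℂ, deriv (deriv w₁) z + A z * w₁ z = 0)
    (hsol₂ : ∀ z : ℂ, deriv (deriv w₂) z + A z * w₂ z = 0)
    (hsol₃ : ∀ z : ℂ, deriv (deriv w₃) z + A z * w₃ z = 0)
    (hind₁₂ : LinIndepPair w₁ w₂) (hind₁₃ : LinIndepPair w₁ w₃)
    (hind₂₃ : LinIndepPair w₂ w₃)
    (hz₁ : ∀ z : ℂ, w₁ z = 0 → z.im = 0)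
    (hz₂ : ∀ z : ℂ, w₂ z = 0 → z.im = 0)
    (hz₃ : ∀ z : ℂ, w₃ z = 0 → z.im = 0) :
    ∃ c : ℂ, ∀ z : ℂ, A z = c := by
  have s₁ : IsSolution A w₁ := ⟨h₁, hsol₁⟩
  have s₂ : IsSolution A w₂ := ⟨h₂, hsol₂⟩
  have s₃ : IsSolution A w₃ := ⟨h₃, hsol₃⟩
  have hup : IsZeroFreeTriple A w₁ w₂ w₃ :=
    ⟨s₁, s₂, s₃, hind₁₂, hind₁₃, hind₂₃, ne_zero_of_real_zeros hz₁,
      ne_zero_of_real_zeros hz₂, ne_zero_of_real_zeros hz₃⟩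
  have hdown : IsZeroFreeTriple (fun z => A (-z)) (fun z => w₁ (-z)) (fun z => w₂ (-z))
      fun z => w₃ (-z) :=
    ⟨s₁.comp_neg, s₂.comp_neg, s₃.comp_neg, hind₁₂.comp_neg, hind₁₃.comp_neg, hind₂₃.comp_neg,
      ne_zero_of_real_zeros (real_zeros_comp_neg hz₁),
      ne_zero_of_real_zeros (real_zeros_comp_neg hz₂),
      ne_zero_of_real_zeros (real_zeros_comp_neg hz₃)⟩
  exact exists_eq_const_of_hasGrowth_zero hA hup.hasGrowth_coefficient
    hdown.hasGrowth_coefficient
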